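/- The self-map g of SU(3) restricts to the squaring map on the embedded SU(2): for every B ∈ SU(2), g(ι(B)) = ι(B²). In particular g maps the subgroup ι(SU(2)) into itself. -/

import Mathlib

/-- The block-diagonal embedding on underlying matrices: `B` in the upper-left `2 × 2` block,
`1` in the `(3,3)` entry, and `0` in the remaining entries. -/
def emb (B : Matrix (Fin 2) (Fin 2) ℂ) : Matrix (Fin 3) (Fin 3) ℂ :=
  !![B 0 0, B 0 1, 0; B 1 0, B 1 1, 0; 0, 0, 1]

open ComplexConjugate

/-- The matrix formula `G(A)` from the paper, defined in terms of the entries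
`a = A₀₀`, `b = A₀₁`, `u = A₀₂`, `v = A₁₂`, `w = A₂₂` of `A` (here `|z|² = z * conj z`). -/
def Gmap (A : Matrix (Fin 3) (Fin 3) ℂ) : Matrix (Fin 3) (Fin 3) ℂ :=
  let a := A 0 0; let b := A 0 1; let u := A 0 2; let v := A 1 2; let w := A 2 2
  !![-u ^ 2 * (conj a * conj b + a * conj b) + (u * v - conj w) * (-a ^ 2 + b * conj b),
     u ^ 2 * (conj a ^ 2 - b * conj b) - (u * v - conj w) * (a * b + conj a * b),
     u * w + conj v;
     -(u * v + conj w) * (conj a * conj b + a * conj b) + v ^ 2 * (-a ^ 2 + b * conj b),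
     (u * v + conj w) * (conj a ^ 2 - b * conj b) - v ^ 2 * (a * b + conj a * b),
     v * w - conj u;
     -(u * w - conj v) * (conj a * conj b + a * conj b) + (conj u + v * w) * (-a ^ 2 + b * conj b),
     (u * w - conj v) * (conj a ^ 2 - b * conj b) - (conj u + v * w) * (a * b + conj a * b),
     w ^ 2]

/-!
On block-diagonal matrices `u = v = 0` and `w = 1`, so `Gmap (emb B)` depends only on the first row
`(a, b)` of `B`, and its upper-left block is the square of the quaternion `a + b j`. When `B` is
special unitary, its adjugate is its conjugate transpose, which forces the second row to be
`(-conj b, conj a)`: then `B` itself is the matrix of `a + b j`.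
-/

section QuaternionMatrix

variable {R : Type*} [CommRing R] [StarRing R]

/-- For `R = ℂ`, the matrix representing the quaternion `a + b j`. It puts the `2 × 2` matrices
whose adjugate is their conjugate transpose in a normal form determined by the first row. -/
def quaternionMatrix (a b : R) : Matrix (Fin 2) (Fin 2) R :=
  !![a, b; -star b, star a]

theorem quaternionMatrix_mul (a b c d : R) :
    quaternionMatrix a b * quaternionMatrix c d =
      quaternionMatrix (a * c - b * star d) (a * d + b * star c) := by
  ext i j
  fin_cases i <;> fin_cases j <;> simp [quaternionMatrix] <;> ring

theorem eq_quaternionMatrix_of_adjugate_eq_star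
    {B : Matrix (Fin 2) (Fin 2) R} (hB : B.adjugate = star B) :
    B = quaternionMatrix (B 0 0) (B 0 1) := by
  rw [Matrix.adjugate_fin_two] at hB
  have h₁₁ : B 1 1 = star (B 0 0) := congrFun₂ hB 0 0
  have h₁₀ : -B 1 0 = star (B 0 1) := congrFun₂ hB 1 0
  rw [quaternionMatrix, ← h₁₁, ← h₁₀, neg_neg]
  exact B.eta_fin_two

theorem adjugate_eq_star_of_mem_specialUnitaryGroup {n : Type*} [Fintype n] [DecidableEq n]
    {B : Matrix n n R} (hB : B ∈ Matrix.specialUnitaryGroup n R) :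
    B.adjugate = star B := by
  obtain ⟨hU, hdet⟩ := Matrix.mem_specialUnitaryGroup_iff.mp hB
  have hadj : B * B.adjugate = 1 := by rw [Matrix.mul_adjugate, hdet, one_smul]
  exact (left_inv_eq_right_inv (Matrix.mem_unitaryGroup_iff'.mp hU) hadj).symm

end QuaternionMatrix

theorem Gmap_emb (B : Matrix (Fin 2) (Fin 2) ℂ) :
    Gmap (emb B) = emb (quaternionMatrix (B 0 0 * B 0 0 - B 0 1 * star (B 0 1))
      (B 0 0 * B 0 1 + B 0 1 * star (B 0 0))) := by
  ext i j
  fin_cases i <;> fin_cases j <;> simp [Gmap, emb, quaternionMatrix] <;> ring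

theorem Gmap_emb_eq_emb_sq_general {B : Matrix (Fin 2) (Fin 2) ℂ} (hB : B.adjugate = star B) :
    Gmap (emb B) = emb (B * B) := by
  rw [Gmap_emb, ← quaternionMatrix_mul, ← eq_quaternionMatrix_of_adjugate_eq_star hB]

/-- The self-map `g` of `SU(3)` restricts to the squaring map on the embedded
`SU(2)`: for every `B ∈ SU(2)`, `g(ι(B)) = ι(B²)`.  In particular, `g` maps the subgroup
`ι(SU(2))` into itself. -/
theorem Gmap_emb_eq_emb_sq :
    (∀ B : Matrix (Fin 2) (Fin 2) ℂ, B ∈ Matrix.specialUnitaryGroup (Fin 2) ℂ →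
      Gmap (emb B) = emb (B * B)) ∧
    ∀ A : Matrix (Fin 3) (Fin 3) ℂ,
      (∃ B ∈ Matrix.specialUnitaryGroup (Fin 2) ℂ, A = emb B) →
      ∃ C ∈ Matrix.specialUnitaryGroup (Fin 2) ℂ, Gmap A = emb C := by
  have Gmap_emb_of_mem (B : Matrix (Fin 2) (Fin 2) ℂ)
      (hB : B ∈ Matrix.specialUnitaryGroup (Fin 2) ℂ) : Gmap (emb B) = emb (B * B) :=
    Gmap_emb_eq_emb_sq_general (adjugate_eq_star_of_mem_specialUnitaryGroup hB)
  refine ⟨Gmap_emb_of_mem, ?_⟩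
  rintro _ ⟨B, hB, rfl⟩
  exact ⟨B * B, mul_mem hB hB, Gmap_emb_of_mem B hB⟩
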